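/- (Lemma 4) Under the hypotheses of the nonnegative bivariate decomposition, suppose ŪI*(S;X₁\X₂) = 0 and let f* attain the maximum defining SĪ(S;X₁,X₂). Then X₁ — f*(S) — S forms a Markov chain (i.e., X₁ and S are conditionally independent given f*(S)), and UI(f*(S);X₁\X₂) = 0. -/

import Mathlib

/- Common definitions: finite joint distributions, mutual information (in nats),
   conditional mutual information, pushforwards, information decompositions. -/

open Finset
open scoped Classical

namespace Paper

noncomputable section

variable {S T T' X X₁ X₂ Z A B : Type*}

/-- Marginal of the first variable of a joint distribution. -/
def m1 [Fintype X] (p : S → X → ℝ) (s : S) : ℝ := ∑ x, p s x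

/-- Marginal of the second variable of a joint distribution. -/
def m2 [Fintype S] (p : S → X → ℝ) (x : X) : ℝ := ∑ s, p s x

/-- Mutual information I(S;X) (in nats) of a finite joint distribution. -/
def MI [Fintype S] [Fintype X] (p : S → X → ℝ) : ℝ :=
  ∑ s, ∑ x, p s x * Real.log (p s x / (m1 p s * m2 p x))

/-- `p` is a probability mass function on the product of two finite alphabets. -/
def IsPMF [Fintype S] [Fintype X] (p : S → X → ℝ) : Prop :=
  (∀ s x, 0 ≤ p s x) ∧ ∑ s, ∑ x, p s x = 1

/-- `p` is a probability mass function on the product of three finite alphabets. -/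
def IsPMF3 [Fintype S] [Fintype X₁] [Fintype X₂] (p : S → X₁ → X₂ → ℝ) : Prop :=
  (∀ s x₁ x₂, 0 ≤ p s x₁ x₂) ∧ ∑ s, ∑ x₁, ∑ x₂, p s x₁ x₂ = 1

/-- Marginal joint distribution of (S,X₁). -/
def m12 [Fintype X₂] (p : S → X₁ → X₂ → ℝ) : S → X₁ → ℝ := fun s x₁ => ∑ x₂, p s x₁ x₂

/-- Marginal joint distribution of (S,X₂). -/
def m13 [Fintype X₁] (p : S → X₁ → X₂ → ℝ) : S → X₂ → ℝ := fun s x₂ => ∑ x₁, p s x₁ x₂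

/-- Joint distribution of (S,(X₁,X₂)). -/
def joint (p : S → X₁ → X₂ → ℝ) : S → X₁ × X₂ → ℝ := fun s x => p s x.1 x.2

/-- I(S;X₁). -/
def MI1 [Fintype S] [Fintype X₁] [Fintype X₂] (p : S → X₁ → X₂ → ℝ) : ℝ := MI (m12 p)

/-- I(S;X₂). -/
def MI2 [Fintype S] [Fintype X₁] [Fintype X₂] (p : S → X₁ → X₂ → ℝ) : ℝ := MI (m13 p)

/-- I(S;X₁X₂). -/
def MI12 [Fintype S] [Fintype X₁] [Fintype X₂] (p : S → X₁ → X₂ → ℝ) : ℝ := MI (joint p)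

/-- Conditional mutual information I(S;X₁ ∣ X₂) (in nats). -/
def CMI [Fintype S] [Fintype X₁] [Fintype X₂] (p : S → X₁ → X₂ → ℝ) : ℝ :=
  ∑ s, ∑ x₁, ∑ x₂, p s x₁ x₂ *
    Real.log ((p s x₁ x₂ * (∑ s', ∑ x₁', p s' x₁' x₂)) /
      ((∑ x₁', p s x₁' x₂) * (∑ s', p s' x₁ x₂)))

/-- Co-information CoI(S;X₁,X₂) = I(S;X₁) − I(S;X₁|X₂). -/
def CoI [Fintype S] [Fintype X₁] [Fintype X₂] (p : S → X₁ → X₂ → ℝ) : ℝ :=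
  MI1 p - CMI p

/-- Swap the two predictor arguments. -/
def swap23 (p : S → X₁ → X₂ → ℝ) : S → X₂ → X₁ → ℝ := fun s x₂ x₁ => p s x₁ x₂

/-- Pushforward of the target variable S by a function f (joint of (f(S),X)). -/
def pushS [Fintype S] (f : S → T) (p : S → X → ℝ) : T → X → ℝ :=
  fun t x => ∑ s, if f s = t then p s x else 0

/-- Pushforward of the target variable S by f, for triples (joint of (f(S),X₁,X₂)). -/
def pushS3 [Fintype S] (f : S → T) (p : S → X₁ → X₂ → ℝ) : T → X₁ → X₂ → ℝ :=
  fun t x₁ x₂ => ∑ s, if f s = t then p s x₁ x₂ else 0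

/-- Joint distribution of the triple (f(S), S, X), from the joint of (S,X). -/
def tripleOf (f : S → T) (p : S → X → ℝ) : T → S → X → ℝ :=
  fun t s x => if f s = t then p s x else 0

/-- A and B are conditionally independent given Z (r is the joint of (Z,A,B));
    equivalently A — Z — B is a Markov chain. -/
def CondIndep [Fintype A] [Fintype B] (r : Z → A → B → ℝ) : Prop :=
  ∀ z a b, r z a b * (∑ a', ∑ b', r z a' b') = (∑ b', r z a b') * (∑ a', r z a' b)

/-- The channel T → X₁ (given by the joint q1) is a garbling/degradation of the
    channel T → X₂ (given by the joint q2): q1 = λ ∘ q2 for a stochastic matrix λ. -/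
def Garbling [Fintype X₁] [Fintype X₂] (q1 : T → X₁ → ℝ) (q2 : T → X₂ → ℝ) : Prop :=
  ∃ lam : X₂ → X₁ → ℝ, (∀ x₂ x₁, 0 ≤ lam x₂ x₁) ∧ (∀ x₂, ∑ x₁, lam x₂ x₁ = 1) ∧
    ∀ t x₁, q1 t x₁ = ∑ x₂, lam x₂ x₁ * q2 t x₂

/-- Joint distribution of (COPY(X₁,X₂), X₁, X₂) built from the joint of (X₁,X₂). -/
def copyTriple (q : X₁ → X₂ → ℝ) : X₁ × X₂ → X₁ → X₂ → ℝ :=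
  fun t x₁ x₂ => if t = (x₁, x₂) then q x₁ x₂ else 0

/-- The extractable information measure IM̄(S;X) := max over functions f on the
    range of S of IM(f(S);X).  (Only the partition of S induced by f matters,
    so functions with codomain S suffice and the supremum is attained.) -/
def extIM [Fintype S] [Fintype X] (IM : (S → X → ℝ) → ℝ) (p : S → X → ℝ) : ℝ :=
  ⨆ f : S → S, IM (pushS f p)

/-- A nonnegative bivariate information decomposition (for fixed predictor
    alphabets X₁, X₂ and varying target alphabet T): shared, unique and
    complementary information, nonnegative and satisfying the Williams–Beer
    bivariate decomposition equations. -/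
structure BID (X₁ X₂ : Type) [Fintype X₁] [Fintype X₂] where
  SI : ∀ (T : Type) [Fintype T], (T → X₁ → X₂ → ℝ) → ℝ
  UI1 : ∀ (T : Type) [Fintype T], (T → X₁ → X₂ → ℝ) → ℝ
  UI2 : ∀ (T : Type) [Fintype T], (T → X₁ → X₂ → ℝ) → ℝ
  CI : ∀ (T : Type) [Fintype T], (T → X₁ → X₂ → ℝ) → ℝ
  SI_nonneg : ∀ (T : Type) [Fintype T] (p : T → X₁ → X₂ → ℝ), IsPMF3 p → 0 ≤ SI T p
  UI1_nonneg : ∀ (T : Type) [Fintype T] (p : T → X₁ → X₂ → ℝ), IsPMF3 p → 0 ≤ UI1 T p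
  UI2_nonneg : ∀ (T : Type) [Fintype T] (p : T → X₁ → X₂ → ℝ), IsPMF3 p → 0 ≤ UI2 T p
  CI_nonneg : ∀ (T : Type) [Fintype T] (p : T → X₁ → X₂ → ℝ), IsPMF3 p → 0 ≤ CI T p
  eq_total : ∀ (T : Type) [Fintype T] (p : T → X₁ → X₂ → ℝ), IsPMF3 p →
    MI12 p = SI T p + CI T p + UI1 T p + UI2 T p
  eq_one : ∀ (T : Type) [Fintype T] (p : T → X₁ → X₂ → ℝ), IsPMF3 p →
    MI1 p = SI T p + UI1 T p
  eq_two : ∀ (T : Type) [Fintype T] (p : T → X₁ → X₂ → ℝ), IsPMF3 p →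
    MI2 p = SI T p + UI2 T p

/-- Extractable shared information SĪ(S;X₁,X₂) := max_f SI(f(S);X₁,X₂). -/
def SIbar {X₁ X₂ : Type} [Fintype X₁] [Fintype X₂] (D : BID X₁ X₂)
    {T : Type} [Fintype T] (p : T → X₁ → X₂ → ℝ) : ℝ :=
  ⨆ f : T → T, D.SI T (pushS3 f p)

/-- Pushforward of the predictors (X₁,...,X_k) ↦ (f₁(X₁),...,f_k(X_k)). -/
def pushPred {ι : Type*} [Fintype ι] [DecidableEq ι] {X : ι → Type*} [∀ i, Fintype (X i)]
    [Fintype S] (f : ∀ i, X i → X i) (p : S → (∀ i, X i) → ℝ) : S → (∀ i, X i) → ℝ :=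
  fun s y => ∑ x, if (fun i => f i (x i)) = y then p s x else 0

/-- Marginal joint distribution of (S, X_i) for a family of predictors. -/
def margFam {ι : Type*} [Fintype ι] [DecidableEq ι] (X : ι → Type*) [∀ i, Fintype (X i)]
    [Fintype S] (p : S → (∀ i, X i) → ℝ) (i : ι) (s : S) (y : X i) : ℝ :=
  ∑ x : ∀ j, X j, if x i = y then p s x else 0

/-- Specific information of s provided by X_i:
    ∑_{x_i} P(x_i|s) log (P(s|x_i)/P(s)). -/
def specInfo {ι : Type*} [Fintype ι] [DecidableEq ι] (X : ι → Type*) [∀ i, Fintype (X i)]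
    [Fintype S] (p : S → (∀ i, X i) → ℝ) (i : ι) (s : S) : ℝ :=
  ∑ y : X i, (margFam X p i s y / m1 p s) *
    Real.log ((margFam X p i s y / (∑ s', margFam X p i s' y)) / m1 p s)

/-- Williams and Beer's measure I_min(S;X₁,...,X_k). -/
def Imin {ι : Type*} [Fintype ι] [DecidableEq ι] [Nonempty ι] (X : ι → Type*)
    [∀ i, Fintype (X i)] [Fintype S] (p : S → (∀ i, X i) → ℝ) : ℝ :=
  ∑ s, m1 p s * ⨅ i, specInfo X p i s

/-- The counterexample distribution on {0,1,2} × {0,1} × {0,1}: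
    P(0,0,0)=1/4, P(1,0,1)=1/4, P(0,1,0)=1/8, P(1,1,0)=1/8, P(2,1,1)=1/4. -/
def cex : Fin 3 → Bool → Bool → ℝ := fun s x₁ x₂ =>
  if s = 0 ∧ x₁ = false ∧ x₂ = false then 1/4
  else if s = 1 ∧ x₁ = false ∧ x₂ = true then 1/4
  else if s = 0 ∧ x₁ = true ∧ x₂ = false then 1/8
  else if s = 1 ∧ x₁ = true ∧ x₂ = false then 1/8
  else if s = 2 ∧ x₁ = true ∧ x₂ = true then 1/4
  else 0

/-- The function f with f(0)=f(1)=0, f(2)=2 on Fin 3 (the partition {0,1},{2}). -/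
def fstar : Fin 3 → Fin 3 := fun s => if s = 2 then 2 else 0


theorem sub_le_mul_log_div {a b : ℝ} (ha : 0 ≤ a) (hb : 0 ≤ b) (hab : b = 0 → a = 0) :
    a - b ≤ a * Real.log (a / b) := by
  rcases ha.eq_or_lt with rfl | ha'
  · simpa using hb
  have hb' : 0 < b := hb.lt_of_ne fun h => ha'.ne' (hab h.symm)
  have h := mul_le_mul_of_nonneg_left (Real.log_le_sub_one_of_pos (div_pos hb' ha')) ha
  have e : a * (b / a - 1) = b - a := by field_simp
  rw [e, ← inv_div, Real.log_inv] at h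
  linarith

theorem eq_of_mul_log_div_eq_sub {a b : ℝ} (ha : 0 ≤ a) (hb : 0 ≤ b) (hab : b = 0 → a = 0)
    (h : a * Real.log (a / b) = a - b) : a = b := by
  rcases ha.eq_or_lt with rfl | ha'
  · linarith
  have hb' : 0 < b := hb.lt_of_ne fun h => ha'.ne' (hab h.symm)
  by_contra hne
  have hlt := mul_lt_mul_of_pos_left (Real.log_lt_sub_one_of_pos (div_pos hb' ha')
    fun e => hne ((div_eq_one_iff_eq ha'.ne').1 e).symm) ha'
  have e : a * (b / a - 1) = b - a := by field_simp
  rw [e, ← inv_div, Real.log_inv] at hlt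
  linarith

/-- The conditionally independent coupling `P(s) P(x ∣ f(s))` of `S` and `X`. -/
def markovJoint [Fintype S] [Fintype X] (f : S → T) (q : S → X → ℝ) (s : S) (x : X) : ℝ :=
  m1 q s * pushS f q (f s) x / m1 (pushS f q) (f s)

theorem pushS_nonneg [Fintype S] {q : S → X → ℝ}
    (hq : ∀ s x, 0 ≤ q s x) (f : S → T) (t : T) (x : X) :
    0 ≤ pushS f q t x :=
  sum_nonneg fun s _ => by split_ifs <;> simp [hq]

theorem le_pushS [Fintype S] {q : S → X → ℝ}
    (hq : ∀ s x, 0 ≤ q s x) (f : S → T) (s : S) (x : X) :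
    q s x ≤ pushS f q (f s) x := by
  have h := single_le_sum (f := fun s' => if f s' = f s then q s' x else 0)
    (fun s' _ => by split_ifs <;> simp [hq]) (mem_univ s)
  simpa [pushS] using h

theorem le_m1 [Fintype X] {q : S → X → ℝ}
    (hq : ∀ s x, 0 ≤ q s x) (s : S) (x : X) : q s x ≤ m1 q s :=
  single_le_sum (f := fun x => q s x) (fun x _ => hq s x) (mem_univ x)

theorem le_m2 [Fintype S] {q : S → X → ℝ}
    (hq : ∀ s x, 0 ≤ q s x) (s : S) (x : X) : q s x ≤ m2 q x :=
  single_le_sum (f := fun s => q s x) (fun s _ => hq s x) (mem_univ s)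

theorem m1_le_m1_pushS [Fintype S] [Fintype X] {q : S → X → ℝ}
    (hq : ∀ s x, 0 ≤ q s x) (f : S → T) (s : S) :
    m1 q s ≤ m1 (pushS f q) (f s) :=
  sum_le_sum fun x _ => le_pushS hq f s x

theorem m1_nonneg [Fintype X] {q : S → X → ℝ}
    (hq : ∀ s x, 0 ≤ q s x) (s : S) : 0 ≤ m1 q s :=
  sum_nonneg fun x _ => hq s x

theorem sum_pushS_mul [Fintype S] [Fintype T]
    (f : S → T) (q : S → X → ℝ) (x : X) (g : T → ℝ) :
    ∑ t, pushS f q t x * g t = ∑ s, q s x * g (f s) := by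
  simp only [pushS, sum_mul]
  rw [sum_comm]
  simp [ite_mul]

theorem m2_pushS [Fintype S] [Fintype T]
    (f : S → T) (q : S → X → ℝ) (x : X) :
    m2 (pushS f q) x = m2 q x := by
  simpa [m2] using sum_pushS_mul f q x fun _ => 1

theorem MI_pushS [Fintype S] [Fintype X] [Fintype T]
    (f : S → T) (q : S → X → ℝ) :
    MI (pushS f q) = ∑ s, ∑ x, q s x *
      Real.log (pushS f q (f s) x / (m1 (pushS f q) (f s) * m2 q x)) := by
  unfold MI
  rw [sum_comm, sum_comm (s := (univ : Finset S))]
  refine sum_congr rfl fun x _ => ?_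
  simp only [m2_pushS]
  exact sum_pushS_mul f q x fun t => Real.log (pushS f q t x / (m1 (pushS f q) t * m2 q x))

theorem markovJoint_nonneg [Fintype S] [Fintype X] {q : S → X → ℝ}
    (hq : ∀ s x, 0 ≤ q s x) (f : S → T) (s : S) (x : X) :
    0 ≤ markovJoint f q s x :=
  div_nonneg (mul_nonneg (m1_nonneg hq s) (pushS_nonneg hq f _ x))
    (m1_nonneg (pushS_nonneg hq f) _)

theorem eq_zero_of_markovJoint_eq_zero [Fintype S] [Fintype X] {q : S → X → ℝ}
    (hq : ∀ s x, 0 ≤ q s x) (f : S → T) (s : S) (x : X)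
    (h : markovJoint f q s x = 0) : q s x = 0 := by
  by_contra hne
  have h0 := (hq s x).lt_of_ne' hne
  have h1 := h0.trans_le (le_m1 hq s x)
  have h2 := h0.trans_le (le_pushS hq f s x)
  have h3 := h1.trans_le (m1_le_m1_pushS hq f s)
  exact (div_pos (mul_pos h1 h2) h3).ne' h

theorem sum_markovJoint [Fintype S] [Fintype X] {q : S → X → ℝ}
    (hq : ∀ s x, 0 ≤ q s x) (f : S → T) (s : S) :
    ∑ x, markovJoint f q s x = m1 q s := by
  have h : ∑ x, markovJoint f q s x
      = m1 q s * m1 (pushS f q) (f s) / m1 (pushS f q) (f s) := by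
    simp only [markovJoint, ← sum_div, ← mul_sum]
    rfl
  rw [h]
  refine mul_div_cancel_of_imp fun h0 => ?_
  exact le_antisymm (h0 ▸ m1_le_m1_pushS hq f s) (m1_nonneg hq s)

theorem MI_sub_MI_pushS [Fintype S] [Fintype X] [Fintype T] {q : S → X → ℝ}
    (hq : ∀ s x, 0 ≤ q s x) (f : S → T) :
    MI q - MI (pushS f q) =
      ∑ s, ∑ x, q s x * Real.log (q s x / markovJoint f q s x) := by
  rw [MI_pushS]
  unfold MI
  simp only [← sum_sub_distrib, ← mul_sub]
  refine sum_congr rfl fun s _ => sum_congr rfl fun x _ => ?_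
  rcases (hq s x).eq_or_lt with h0 | h0
  · simp [← h0]
  have h1 := h0.trans_le (le_m1 hq s x)
  have h2 := h0.trans_le (le_pushS hq f s x)
  have h3 := h1.trans_le (m1_le_m1_pushS hq f s)
  have h4 := h0.trans_le (le_m2 hq s x)
  rw [← Real.log_div (div_pos h0 (mul_pos h1 h4)).ne' (div_pos h2 (mul_pos h3 h4)).ne']
  congr 2
  unfold markovJoint
  field_simp

theorem sum_sub_markovJoint [Fintype S] [Fintype X] {q : S → X → ℝ}
    (hq : ∀ s x, 0 ≤ q s x) (f : S → T) :
    ∑ s, ∑ x, (q s x - markovJoint f q s x) = 0 :=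
  sum_eq_zero fun s _ => by
    rw [sum_sub_distrib, sum_markovJoint hq, m1, sub_self]

/-- Data processing inequality for a deterministic function of the target. -/
theorem MI_pushS_le [Fintype S] [Fintype X] [Fintype T] {q : S → X → ℝ}
    (hq : ∀ s x, 0 ≤ q s x) (f : S → T) :
    MI (pushS f q) ≤ MI q := by
  rw [← sub_nonneg, MI_sub_MI_pushS hq, ← sum_sub_markovJoint hq f]
  exact sum_le_sum fun s _ => sum_le_sum fun x _ =>
    sub_le_mul_log_div (hq s x) (markovJoint_nonneg hq f s x)
      (eq_zero_of_markovJoint_eq_zero hq f s x)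

theorem eq_markovJoint_of_MI_pushS_eq [Fintype S] [Fintype X] [Fintype T] {q : S → X → ℝ}
    (hq : ∀ s x, 0 ≤ q s x) (f : S → T)
    (h : MI (pushS f q) = MI q) (s : S) (x : X) : q s x = markovJoint f q s x := by
  have hle : ∀ s x, q s x - markovJoint f q s x ≤
      q s x * Real.log (q s x / markovJoint f q s x) := fun s x =>
    sub_le_mul_log_div (hq s x) (markovJoint_nonneg hq f s x)
      (eq_zero_of_markovJoint_eq_zero hq f s x)
  have hsum : ∑ s, ∑ x, (q s x - markovJoint f q s x) =
      ∑ s, ∑ x, q s x * Real.log (q s x / markovJoint f q s x) := by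
    rw [sum_sub_markovJoint hq, ← MI_sub_MI_pushS hq, h, sub_self]
  have hs := (sum_eq_sum_iff_of_le fun s _ => sum_le_sum fun x _ => hle s x).1 hsum s (mem_univ s)
  have hx := (sum_eq_sum_iff_of_le fun x _ => hle s x).1 hs x (mem_univ x)
  exact eq_of_mul_log_div_eq_sub (hq s x) (markovJoint_nonneg hq f s x)
    (eq_zero_of_markovJoint_eq_zero hq f s x) hx.symm

/-- Equality in the data processing inequality forces the Markov chain `X — f(S) — S`. -/
theorem condIndep_of_MI_pushS_eq [Fintype S] [Fintype X] [Fintype T] {q : S → X → ℝ}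
    (hq : ∀ s x, 0 ≤ q s x) (f : S → T)
    (h : MI (pushS f q) = MI q) : CondIndep (tripleOf f q) := by
  intro t s x
  by_cases hst : f s = t
  · subst hst
    have hm : ∑ s', ∑ x', tripleOf f q (f s) s' x' = m1 (pushS f q) (f s) := by
      rw [sum_comm]
      rfl
    have hP : ∑ s', tripleOf f q (f s) s' x = pushS f q (f s) x := rfl
    have hs : ∀ x', tripleOf f q (f s) s x' = q s x' := fun x' => if_pos rfl
    rw [hm, hP, sum_congr rfl fun x' _ => hs x', hs]
    rw [eq_markovJoint_of_MI_pushS_eq hq f h s x]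
    refine div_mul_cancel_of_imp fun h0 => ?_
    have h1 : m1 q s = 0 := le_antisymm (h0 ▸ m1_le_m1_pushS hq f s) (m1_nonneg hq s)
    rw [h1, zero_mul]
  · simp [tripleOf, hst]

theorem m12_pushS3 [Fintype S] [Fintype X₂] (f : S → T) (p : S → X₁ → X₂ → ℝ) :
    m12 (pushS3 f p) = pushS f (m12 p) := by
  funext t x₁
  simp only [m12, pushS3, pushS]
  rw [sum_comm]
  exact sum_congr rfl fun s _ => by split_ifs <;> simp

theorem IsPMF3.pushS3 [Fintype S] [Fintype T] [Fintype X₁] [Fintype X₂]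
    {p : S → X₁ → X₂ → ℝ} (hp : IsPMF3 p) (f : S → T) : IsPMF3 (pushS3 f p) := by
  refine ⟨fun t x₁ x₂ => sum_nonneg fun s _ => ?_, ?_⟩
  · split_ifs <;> simp [hp.1]
  · rw [← hp.2, ← sum_fiberwise (s := univ) (g := f)]
    refine sum_congr rfl fun t _ => ?_
    simp only [Paper.pushS3, ← sum_filter]
    rw [sum_comm]
    simp only [sum_comm (s := (univ : Finset X₂))]
    rw [sum_comm]

/-- Lemma 4: if ŪI*(S;X₁\X₂) = 0 and f* attains the maximum defining
SĪ(S;X₁,X₂), then X₁ — f*(S) — S is a Markov chain and UI(f*(S);X₁\X₂) = 0. -/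
theorem zero_UIbar_star {X₁ X₂ : Type} [Fintype X₁] [Fintype X₂]
    (D : BID X₁ X₂) {T : Type} [Fintype T]
    (p : T → X₁ → X₂ → ℝ) (hp : IsPMF3 p)
    (f : T → T) (hf : D.SI T (pushS3 f p) = SIbar D p)
    (h0 : MI1 p - SIbar D p = 0) :
    CondIndep (tripleOf f (m12 p)) ∧ D.UI1 T (pushS3 f p) = 0 := by
  have hq : ∀ t x₁, 0 ≤ m12 p t x₁ := fun t x₁ => sum_nonneg fun x₂ _ => hp.1 t x₁ x₂
  have hone := D.eq_one T _ (hp.pushS3 f)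
  have hnonneg := D.UI1_nonneg T _ (hp.pushS3 f)
  have hle := MI_pushS_le hq f
  simp only [MI1, m12_pushS3] at hone h0
  exact ⟨condIndep_of_MI_pushS_eq hq f (by linarith), by linarith⟩

end
end Paper
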